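/- Fix a finite number of channel uses k ≥ 1. Suppose the DMC admits inputs x₀, x₁ ∈ 𝒳 and an output y* ∈ 𝒴 with Γ_{Y|X}(y*|x₀) > 0 and Γ_{Y|X}(y*|x₁) = 0, and let ε ≥ (1 − Γ_{Y|X}(y*|x₀))^k. Then every θ < min{ D(π_{UV} ‖ Q_{UV}) : π_{UV} a pmf on 𝒰×𝒱 with π_U = P_U and π_V = P_V } is ε-achievable using exactly k channel uses at every blocklength n: there exist schemes (f^{(n)}, g^{(n)}) with k channel uses satisfying limsup_n α_n ≤ ε and liminf_n −(1/n) log₂ β_n ≥ θ. -/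

import Mathlib

open Filter

/-- Base-2 Kullback–Leibler divergence between two pmfs on a finite alphabet. -/
noncomputable def klDiv2 {A : Type} [Fintype A] (p q : A → ℝ) : ℝ :=
  ∑ a, p a * Real.logb 2 (p a / q a)

/-- `p` is a probability mass function on the finite alphabet `A`. -/
def IsPMF {A : Type} [Fintype A] (p : A → ℝ) : Prop :=
  (∀ a, 0 ≤ p a) ∧ ∑ a, p a = 1

/-- `𝒰`-marginal of a joint pmf on `U × V`. -/
noncomputable def margU {U V : Type} [Fintype U] [Fintype V] (p : U × V → ℝ) (u : U) : ℝ :=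
  ∑ v, p (u, v)

/-- `𝒱`-marginal of a joint pmf on `U × V`. -/
noncomputable def margV {U V : Type} [Fintype U] [Fintype V] (p : U × V → ℝ) (v : V) : ℝ :=
  ∑ u, p (u, v)

/-- Probability, under source law `R` (i.i.d. over `n` samples) and DMC `Γ`
(memoryless over `k` uses, input `f u`), that the decision `g v y` equals `b`.
Here `b = true` encodes `Ĥ = 1` and `b = false` encodes `Ĥ = 0`. -/
noncomputable def decProb {U V X Y : Type} [Fintype U] [Fintype V] [Fintype X] [Fintype Y]
    (R : U × V → ℝ) (Γ : X → Y → ℝ) {n k : ℕ}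
    (f : (Fin n → U) → Fin k → X) (g : (Fin n → V) → (Fin k → Y) → Bool) (b : Bool) : ℝ :=
  ∑ u : Fin n → U, ∑ v : Fin n → V, ∑ y : Fin k → Y,
    (∏ i, R (u i, v i)) * (∏ j, Γ (f u j) (y j)) * (if g v y = b then 1 else 0)

/-- The set of `ε`-achievable type-II (miss-detection) error exponents with a
sublinear number of channel uses. -/
noncomputable def steinSetSublin {U V X Y : Type} [Fintype U] [Fintype V] [Fintype X] [Fintype Y]
    (P Q : U × V → ℝ) (Γ : X → Y → ℝ) (ε : ℝ) : Set ℝ :=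
  {θ | 0 < θ ∧ ∃ (k : ℕ → ℕ)
      (f : ∀ n, (Fin n → U) → Fin (k n) → X)
      (g : ∀ n, (Fin n → V) → (Fin (k n) → Y) → Bool),
      Tendsto (fun n => (k n : ℝ)) atTop atTop ∧
      Tendsto (fun n => (k n : ℝ) / (n : ℝ)) atTop (nhds 0) ∧
      limsup (fun n : ℕ => decProb P Γ (f n) (g n) true) atTop ≤ ε ∧
      θ ≤ liminf (fun n : ℕ => -(1 / (n : ℝ)) * Real.logb 2 (decProb Q Γ (f n) (g n) false)) atTop}

/-- Minimum of `D(π‖Q)` over all pmfs `π` on `U × V` with prescribed marginals. -/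
noncomputable def minDivMarg {U V : Type} [Fintype U] [Fintype V]
    (Q : U × V → ℝ) (pU : U → ℝ) (pV : V → ℝ) : ℝ :=
  sInf {d | ∃ π : U × V → ℝ, IsPMF π ∧
    (∀ u, margU π u = pU u) ∧ (∀ v, margV π v = pV v) ∧ d = klDiv2 π Q}


open Classical in
noncomputable def empF {A : Type} {n : ℕ} (w : Fin n → A) (a : A) : ℝ :=
  (∑ i, if w i = a then (1 : ℝ) else 0) / n

noncomputable def devF {A : Type} [Fintype A] {n : ℕ} (p : A → ℝ) (w : Fin n → A) : ℝ :=
  ∑ a, (empF w a - p a) ^ 2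

lemma sum_cons_aux {A : Type} [Fintype A] {n : ℕ} (F : (Fin (n + 1) → A) → ℝ) :
    ∑ w, F w = ∑ a : A, ∑ w : Fin n → A, F (Fin.cons a w) := by
  rw [← Fintype.sum_prod_type']
  exact (Fintype.sum_equiv (Fin.consEquiv (fun _ : Fin (n + 1) => A)) _ _ (fun x => rfl)).symm

lemma prod_total {A : Type} [Fintype A] {n : ℕ} (R : A → ℝ) (hR : IsPMF R) :
    ∑ w : Fin n → A, ∏ i, R (w i) = 1 := by
  classical
  have := Finset.prod_univ_sum (fun _ : Fin n => (Finset.univ : Finset A)) (fun _ a => R a)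
  rw [Fintype.piFinset_univ] at this
  rw [← this]; simp [hR.2]

lemma moment1 {A : Type} [Fintype A] (R : A → ℝ) (hR : IsPMF R) (φ : A → ℝ)
    (h0 : ∑ a, R a * φ a = 0) (n : ℕ) :
    ∑ w : Fin n → A, (∏ i, R (w i)) * (∑ i, φ (w i)) = 0 := by
  induction n with
  | zero => simp
  | succ n ih =>
    rw [sum_cons_aux]
    have : ∀ a : A, ∑ w : Fin n → A, (∏ i, R ((Fin.cons a w : Fin (n+1) → A) i)) *
        (∑ i, φ ((Fin.cons a w : Fin (n+1) → A) i)) = R a * φ a := by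
      intro a
      have e : ∀ w : Fin n → A, (∏ i, R ((Fin.cons a w : Fin (n+1) → A) i)) *
        (∑ i, φ ((Fin.cons a w : Fin (n+1) → A) i)) =
        R a * φ a * (∏ i, R (w i)) + R a * ((∏ i, R (w i)) * (∑ i, φ (w i))) := by
        intro w
        rw [Fin.prod_univ_succ, Fin.sum_univ_succ]
        simp only [Fin.cons_zero, Fin.cons_succ]
        ring
      simp_rw [e]
      rw [Finset.sum_add_distrib, ← Finset.mul_sum, ← Finset.mul_sum, ih, prod_total R hR]
      ring
    simp_rw [this]; exact h0

lemma moment2 {A : Type} [Fintype A] (R : A → ℝ) (hR : IsPMF R) (φ : A → ℝ)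
    (h0 : ∑ a, R a * φ a = 0) (n : ℕ) :
    ∑ w : Fin n → A, (∏ i, R (w i)) * (∑ i, φ (w i)) ^ 2 = n * ∑ a, R a * φ a ^ 2 := by
  induction n with
  | zero => simp
  | succ n ih =>
    rw [sum_cons_aux]
    have : ∀ a : A, ∑ w : Fin n → A, (∏ i, R ((Fin.cons a w : Fin (n+1) → A) i)) *
        (∑ i, φ ((Fin.cons a w : Fin (n+1) → A) i)) ^ 2 =
          R a * φ a ^ 2 + R a * (n * ∑ a, R a * φ a ^ 2) := by
      intro a
      have e : ∀ w : Fin n → A, (∏ i, R ((Fin.cons a w : Fin (n+1) → A) i)) *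
        (∑ i, φ ((Fin.cons a w : Fin (n+1) → A) i)) ^ 2 =
        R a * φ a ^ 2 * (∏ i, R (w i)) + 2 * R a * φ a * ((∏ i, R (w i)) * (∑ i, φ (w i)))
         + R a * ((∏ i, R (w i)) * (∑ i, φ (w i)) ^ 2) := by
        intro w
        rw [Fin.prod_univ_succ, Fin.sum_univ_succ]
        simp only [Fin.cons_zero, Fin.cons_succ]
        ring
      simp_rw [e]
      rw [Finset.sum_add_distrib, Finset.sum_add_distrib, ← Finset.mul_sum, ← Finset.mul_sum,
        ← Finset.mul_sum, ih, prod_total R hR, moment1 R hR φ h0]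
      ring
    simp_rw [this]
    rw [Finset.sum_add_distrib, ← Finset.sum_mul, hR.2]
    push_cast; ring

lemma sum_emp {A : Type} [Fintype A] {n : ℕ} (hn : 0 < n) (w : Fin n → A) (φ : A → ℝ) :
    ∑ i, φ (w i) = n * ∑ a, empF w a * φ a := by
  classical
  have hn' : (n : ℝ) ≠ 0 := by positivity
  rw [Finset.mul_sum]
  have : ∀ a, (n : ℝ) * (empF w a * φ a) = ∑ i, if w i = a then φ a else 0 := by
    intro a
    unfold empF
    rw [← mul_assoc, mul_div_cancel₀ _ hn', Finset.sum_mul]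
    refine Finset.sum_congr rfl fun i _ => ?_
    by_cases h : w i = a <;> simp [h]
  simp_rw [this]
  rw [Finset.sum_comm]
  simp

lemma emp_pmf {A : Type} [Fintype A] {n : ℕ} (hn : 0 < n) (w : Fin n → A) : IsPMF (empF w) := by
  classical
  refine ⟨fun a => ?_, ?_⟩
  · unfold empF
    refine div_nonneg (Finset.sum_nonneg fun i _ => ?_) (by positivity)
    split_ifs <;> norm_num
  · have h := sum_emp hn w (fun _ => 1)
    have hn' : (n : ℝ) ≠ 0 := by positivity
    simp at h
    field_simp at h
    tauto

lemma emp_pos {A : Type} {n : ℕ} (w : Fin n → A) (i : Fin n) : 0 < empF w (w i) := by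
  classical
  have hn : 0 < n := i.pos
  unfold empF
  refine div_pos ?_ (by positivity)
  refine Finset.sum_pos' (fun j _ => ?_) ⟨i, Finset.mem_univ _, ?_⟩
  · split_ifs <;> norm_num
  · simp

/-- Chebyshev for a function of the letter. -/
lemma cheb {A B : Type} [Fintype A] [Fintype B] (R : A → ℝ) (hR : IsPMF R) (t : A → B)
    (p : B → ℝ) (hp : ∀ φ : B → ℝ, ∑ b, p b * φ b = ∑ a, R a * φ (t a))
    {n : ℕ} (hn : 0 < n) (δ : ℝ) (hδ : 0 < δ) :
    ∑ w : Fin n → A, (∏ i, R (w i)) * (if devF p (fun i => t (w i)) ≤ δ then 0 else 1)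
      ≤ Fintype.card B / (n * δ) := by
  classical
  have hn' : (0 : ℝ) < n := by positivity
  have hR0 : ∀ w : Fin n → A, 0 ≤ ∏ i, R (w i) := fun w => Finset.prod_nonneg fun i _ => hR.1 _
  have h1 : ∑ w : Fin n → A, (∏ i, R (w i)) * (if devF p (fun i => t (w i)) ≤ δ then 0 else 1)
      ≤ ∑ w : Fin n → A, (∏ i, R (w i)) * (devF p (fun i => t (w i)) / δ) := by
    refine Finset.sum_le_sum fun w _ => mul_le_mul_of_nonneg_left ?_ (hR0 w)
    have : 0 ≤ devF p (fun i => t (w i)) := Finset.sum_nonneg fun _ _ => sq_nonneg _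
    split_ifs with h
    · positivity
    · rw [le_div_iff₀ hδ]; linarith
  refine h1.trans ?_
  have h2 : ∀ w : Fin n → A, (∏ i, R (w i)) * (devF p (fun i => t (w i)) / δ) =
      ∑ b, (1 / (n ^ 2 * δ)) * ((∏ i, R (w i)) *
        (∑ i, ((if t (w i) = b then (1 : ℝ) else 0) - p b)) ^ 2) := by
    intro w
    unfold devF
    rw [Finset.sum_div, Finset.mul_sum]
    refine Finset.sum_congr rfl fun b _ => ?_
    have : empF (fun i => t (w i)) b - p b =
      (∑ i, ((if t (w i) = b then (1 : ℝ) else 0) - p b)) / n := by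
      unfold empF
      rw [Finset.sum_sub_distrib]
      simp
      field_simp
    rw [this]
    field_simp
  simp_rw [h2]
  rw [Finset.sum_comm]
  have h3 : ∀ b : B, ∑ w : Fin n → A, (1 / (n ^ 2 * δ)) * ((∏ i, R (w i)) *
        (∑ i, ((if t (w i) = b then (1 : ℝ) else 0) - p b)) ^ 2) ≤ 1 / (n * δ) := by
    intro b
    rw [← Finset.mul_sum]
    have hb : ∑ a, R a * (if t a = b then (1 : ℝ) else 0) = p b := by
      have := hp (fun c => if c = b then 1 else 0)
      simp only [mul_ite, mul_one, mul_zero, Finset.sum_ite_eq', Finset.mem_univ, if_true] at this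
      simp [this]
    have hb0 : 0 ≤ p b := by
      rw [← hb]; refine Finset.sum_nonneg fun a _ => mul_nonneg (hR.1 a) ?_
      split_ifs <;> norm_num
    have hm := moment2 R hR (fun a => (if t a = b then (1 : ℝ) else 0) - p b) (by
      simp_rw [mul_sub]
      rw [Finset.sum_sub_distrib, ← Finset.sum_mul, hR.2, hb]; ring) n
    rw [hm]
    have hv : ∑ a, R a * ((if t a = b then (1 : ℝ) else 0) - p b) ^ 2 ≤ 1 := by
      have e : ∀ a, R a * ((if t a = b then (1 : ℝ) else 0) - p b) ^ 2 =
        (1 - 2 * p b) * (R a * (if t a = b then (1 : ℝ) else 0)) + R a * p b ^ 2 := by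
        intro a; split_ifs <;> ring
      simp_rw [e]
      rw [Finset.sum_add_distrib, ← Finset.mul_sum, ← Finset.sum_mul, hR.2, hb]
      nlinarith [sq_nonneg (p b - 1/2)]
    calc _ ≤ 1 / (n ^ 2 * δ) * ((n : ℝ) * 1) := by gcongr
      _ = _ := by field_simp
  calc _ ≤ ∑ b : B, (1 / (n * δ) : ℝ) := Finset.sum_le_sum fun b _ => h3 b
    _ = _ := by simp; field_simp

lemma Q_eq {A : Type} [Fintype A] (Q : A → ℝ) (hQ : ∀ a, 0 < Q a) {n : ℕ} (hn : 0 < n)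
    (w : Fin n → A) :
    ∏ i, Q (w i) = (∏ i, empF w (w i)) * (2 : ℝ) ^ (-(n * klDiv2 (empF w) Q)) := by
  unfold klDiv2
  rw [← sum_emp hn w (fun a => Real.logb 2 (empF w a / Q a)), ← Finset.sum_neg_distrib,
    Real.rpow_sum_of_pos (by norm_num : (0:ℝ) < 2), ← Finset.prod_mul_distrib]
  refine Finset.prod_congr rfl fun i _ => ?_
  have h1 := emp_pos w i
  have h2 := hQ (w i)
  rw [Real.rpow_neg (by norm_num), Real.rpow_logb (by norm_num) (by norm_num) (by positivity)]
  field_simp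

lemma types_bound {A : Type} [Fintype A] (Q : A → ℝ) (hQ : ∀ a, 0 < Q a) {n : ℕ} (hn : 0 < n)
    (T : (Fin n → A) → Prop) [DecidablePred T] (θ : ℝ) (hT : ∀ w, T w → θ ≤ klDiv2 (empF w) Q) :
    ∑ w : Fin n → A, (∏ i, Q (w i)) * (if T w then 1 else 0)
      ≤ (n + 1 : ℝ) ^ Fintype.card A * (2 : ℝ) ^ (-(n * θ)) := by
  classical
  let c : (Fin n → A) → (A → Fin (n + 1)) := fun w a =>
    ⟨(Finset.univ.filter fun i => w i = a).card, by
      have := Finset.card_le_univ (Finset.univ.filter fun i => w i = a)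
      simp at this; omega⟩
  have hc : ∀ w a, empF w a = ((c w a : ℕ) : ℝ) / n := by
    intro w a; simp [empF, c]
  rw [← Finset.sum_fiberwise Finset.univ c]
  have key : ∀ j : A → Fin (n + 1), ∑ w with c w = j, (∏ i, Q (w i)) * (if T w then 1 else 0)
      ≤ (2 : ℝ) ^ (-(n * θ)) := by
    intro j
    by_cases hj : ∃ w₀, c w₀ = j
    · obtain ⟨w₀, rfl⟩ := hj
      have hp := emp_pmf hn w₀
      have : ∀ w ∈ Finset.univ.filter (fun w => c w = c w₀),
          (∏ i, Q (w i)) * (if T w then (1 : ℝ) else 0) ≤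
          (∏ i, empF w₀ (w i)) * (2 : ℝ) ^ (-(n * θ)) := by
        intro w hw
        have hw' : c w = c w₀ := by simpa using hw
        have he : empF w = empF w₀ := by
          funext a; rw [hc, hc, hw']
        have h0 : 0 ≤ ∏ i, empF w₀ (w i) := Finset.prod_nonneg fun i _ => hp.1 _
        split_ifs with h
        · rw [Q_eq Q hQ hn, mul_one, ← he]
          rw [← he] at h0
          refine mul_le_mul_of_nonneg_left ?_ h0
          refine Real.rpow_le_rpow_of_exponent_le (by norm_num) ?_
          have := hT w h
          have : (n : ℝ) * θ ≤ n * klDiv2 (empF w) Q := by gcongr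
          linarith
        · rw [mul_zero]; positivity
      refine (Finset.sum_le_sum this).trans ?_
      refine (Finset.sum_le_sum_of_subset_of_nonneg (Finset.subset_univ _) ?_).trans ?_
      · intro w _ _
        have h0 : 0 ≤ ∏ i, empF w₀ (w i) := Finset.prod_nonneg fun i _ => hp.1 _
        positivity
      · rw [← Finset.sum_mul, prod_total _ hp, one_mul]
    · rw [Finset.filter_false_of_mem]
      · simp; positivity
      · intro w _ h; exact hj ⟨w, h⟩
  calc _ ≤ ∑ j : A → Fin (n + 1), (2 : ℝ) ^ (-(n * θ)) := Finset.sum_le_sum fun j _ => key j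
    _ = _ := by simp

lemma kl_cont {A : Type} [Fintype A] (Q : A → ℝ) (hQ : ∀ a, 0 < Q a) :
    Continuous (fun π : A → ℝ => klDiv2 π Q) := by
  have : (fun π : A → ℝ => klDiv2 π Q) = fun π : A → ℝ =>
      ∑ a, (π a * Real.log (π a) - π a * Real.log (Q a)) / Real.log 2 := by
    funext π
    refine Finset.sum_congr rfl fun a _ => ?_
    by_cases h : π a = 0
    · simp [h]
    · rw [Real.logb, Real.log_div h (hQ a).ne']; ring
  rw [this]
  refine continuous_finset_sum _ fun a _ => ?_
  have h1 : Continuous fun π : A → ℝ => π a * Real.log (π a) :=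
    Real.continuous_mul_log.comp (continuous_apply a)
  fun_prop

lemma pmf_compact {A : Type} [Fintype A] : IsCompact {π : A → ℝ | IsPMF π} := by
  have := isCompact_stdSimplex ℝ A
  exact this

lemma exists_delta {U V : Type} [Fintype U] [Fintype V] (Q : U × V → ℝ) (hQ : ∀ p, 0 < Q p)
    (pU : U → ℝ) (pV : V → ℝ) (θ : ℝ) (hθ : θ < minDivMarg Q pU pV) :
    ∃ δ > 0, ∀ π : U × V → ℝ, IsPMF π → ∑ u, (margU π u - pU u) ^ 2 ≤ δ →
      ∑ v, (margV π v - pV v) ^ 2 ≤ δ → θ ≤ klDiv2 π Q := by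
  have hK : IsCompact ({π : U × V → ℝ | IsPMF π} ∩ {π | klDiv2 π Q ≤ θ}) :=
    pmf_compact.inter_right (isClosed_le (kl_cont Q hQ) continuous_const)
  let h : (U × V → ℝ) → ℝ := fun π =>
    ∑ u, (margU π u - pU u) ^ 2 + ∑ v, (margV π v - pV v) ^ 2
  have hh : Continuous h := by
    unfold h margU margV; fun_prop
  rcases ({π : U × V → ℝ | IsPMF π} ∩ {π | klDiv2 π Q ≤ θ}).eq_empty_or_nonempty with he | hne
  · refine ⟨1, one_pos, fun π hπ _ _ => ?_⟩
    by_contra hc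
    have : π ∈ ({π : U × V → ℝ | IsPMF π} ∩ {π | klDiv2 π Q ≤ θ}) := ⟨hπ, (not_le.1 hc).le⟩
    rw [he] at this; exact this
  · obtain ⟨π₀, hπ₀, hmin⟩ := hK.exists_isMinOn hne hh.continuousOn
    have hU : ∀ π : U × V → ℝ, 0 ≤ ∑ u, (margU π u - pU u) ^ 2 :=
      fun π => Finset.sum_nonneg fun _ _ => sq_nonneg _
    have hV : ∀ π : U × V → ℝ, 0 ≤ ∑ v, (margV π v - pV v) ^ 2 :=
      fun π => Finset.sum_nonneg fun _ _ => sq_nonneg _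
    have hpos : 0 < h π₀ := by
      by_contra hc
      have hc' : ∑ u, (margU π₀ u - pU u) ^ 2 + ∑ v, (margV π₀ v - pV v) ^ 2 ≤ 0 := not_lt.1 hc
      have e1 : ∑ u, (margU π₀ u - pU u) ^ 2 = 0 := by linarith [hU π₀, hV π₀]
      have e2 : ∑ v, (margV π₀ v - pV v) ^ 2 = 0 := by linarith [hU π₀, hV π₀]
      rw [Finset.sum_eq_zero_iff_of_nonneg (fun _ _ => sq_nonneg _)] at e1 e2
      have m : minDivMarg Q pU pV ≤ klDiv2 π₀ Q := by
        refine csInf_le ?_ ⟨π₀, hπ₀.1, fun u => ?_, fun v => ?_, rfl⟩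
        · refine (pmf_compact.image (kl_cont Q hQ)).bddBelow.mono ?_
          rintro d ⟨π, h1, _, _, rfl⟩
          exact ⟨π, h1, rfl⟩
        · have := e1 u (Finset.mem_univ _)
          rw [sq_eq_zero_iff] at this; linarith
        · have := e2 v (Finset.mem_univ _)
          rw [sq_eq_zero_iff] at this; linarith
      have := hπ₀.2
      simp only [Set.mem_setOf_eq] at this
      linarith
    refine ⟨h π₀ / 3, by positivity, fun π hπ h1 h2 => ?_⟩
    by_contra hc
    have : h π₀ ≤ h π := hmin ⟨hπ, (not_le.1 hc).le⟩
    have e : h π = ∑ u, (margU π u - pU u) ^ 2 + ∑ v, (margV π v - pV v) ^ 2 := rfl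
    linarith

lemma margU_emp {U V : Type} [Fintype U] [Fintype V] {n : ℕ} (w : Fin n → U × V) (u : U) :
    margU (empF w) u = empF (fun i => (w i).1) u := by
  classical
  unfold margU empF
  rw [← Finset.sum_div, Finset.sum_comm]
  congr 1
  refine Finset.sum_congr rfl fun i _ => ?_
  rcases hwi : w i with ⟨a, b⟩
  by_cases h : a = u <;> simp [h, hwi]

lemma margV_emp {U V : Type} [Fintype U] [Fintype V] {n : ℕ} (w : Fin n → U × V) (v : V) :
    margV (empF w) v = empF (fun i => (w i).2) v := by
  classical
  unfold margV empF
  rw [← Finset.sum_div, Finset.sum_comm]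
  congr 1
  refine Finset.sum_congr rfl fun i _ => ?_
  rcases hwi : w i with ⟨a, b⟩
  by_cases h : b = v <;> simp [h, hwi]

lemma decProb_eq {U V X Y : Type} [Fintype U] [Fintype V] [Fintype X] [Fintype Y]
    (R : U × V → ℝ) (Γ : X → Y → ℝ) {n k : ℕ}
    (f : (Fin n → U) → Fin k → X) (g : (Fin n → V) → (Fin k → Y) → Bool) (b : Bool) :
    decProb R Γ f g b = ∑ w : Fin n → U × V, (∏ i, R (w i)) *
      ∑ y : Fin k → Y, (∏ j, Γ (f (fun i => (w i).1) j) (y j)) *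
        (if g (fun i => (w i).2) y = b then 1 else 0) := by
  unfold decProb
  rw [← Fintype.sum_prod_type']
  symm
  refine Fintype.sum_equiv (Equiv.arrowProdEquivProdArrow (Fin n) (fun _ => U) (fun _ => V)) _ _ fun w => ?_
  rw [Finset.mul_sum]
  refine Finset.sum_congr rfl fun y _ => ?_
  rw [← mul_assoc]
  rfl

lemma inner_miss {Y : Type} [Fintype Y] [DecidableEq Y] (G : Y → ℝ) (hG : IsPMF G) (ys : Y)
    (k : ℕ) :
    ∑ y : Fin k → Y, (∏ j, G (y j)) * (if ∃ j, y j = ys then 0 else 1) = (1 - G ys) ^ k := by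
  have h1 : ∀ y : Fin k → Y, (∏ j, G (y j)) * (if ∃ j, y j = ys then (0 : ℝ) else 1) =
      ∏ j, (G (y j) * if y j = ys then 0 else 1) := by
    intro y
    rw [Finset.prod_mul_distrib]
    congr 1
    split_ifs with h
    · obtain ⟨j, hj⟩ := h
      exact (Finset.prod_eq_zero (Finset.mem_univ j) (by simp [hj])).symm
    · push Not at h
      simp [h]
  simp_rw [h1]
  have := Finset.prod_univ_sum (fun _ : Fin k => (Finset.univ : Finset Y))
    (fun _ a => G a * if a = ys then 0 else 1)
  rw [Fintype.piFinset_univ] at this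
  rw [← this]
  have h2 : ∑ a, G a * (if a = ys then 0 else 1) = 1 - G ys := by
    have : ∀ a, G a * (if a = ys then (0 : ℝ) else 1) = G a - if a = ys then G a else 0 := by
      intro a; split_ifs <;> ring
    simp_rw [this]
    rw [Finset.sum_sub_distrib, hG.2]; simp
  rw [h2]; simp

/-- With a fixed finite number `k ≥ 1` of channel uses, if the
DMC admits `x₀, x₁, y*` with `Γ(y*|x₀) > 0` and `Γ(y*|x₁) = 0`, and
`ε ≥ (1 − Γ(y*|x₀))^k`, then every exponent
`θ < min { D(π_{UV} ‖ Q_{UV}) : π_U = P_U, π_V = P_V }` is `ε`-achievable using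
exactly `k` channel uses at every blocklength. -/
theorem stein_finite_k_achievability
    {U V X Y : Type} [Fintype U] [Fintype V] [Fintype X] [Fintype Y]
    (P Q : U × V → ℝ) (hP : IsPMF P) (hQ : IsPMF Q) (hQpos : ∀ p : U × V, 0 < Q p)
    (Γ : X → Y → ℝ) (hΓ : ∀ x, IsPMF (Γ x))
    (k : ℕ) (hk : 1 ≤ k)
    (x₀ x₁ : X) (ystar : Y)
    (h₀ : 0 < Γ x₀ ystar) (h₁ : Γ x₁ ystar = 0)
    (ε : ℝ) (hε : (1 - Γ x₀ ystar) ^ k ≤ ε)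
    (θ : ℝ) (hθ : θ < minDivMarg Q (margU P) (margV P)) :
    ∃ (f : ∀ n : ℕ, (Fin n → U) → Fin k → X)
      (g : ∀ n : ℕ, (Fin n → V) → (Fin k → Y) → Bool),
      limsup (fun n : ℕ => decProb P Γ (f n) (g n) true) atTop ≤ ε ∧
      θ ≤ liminf (fun n : ℕ =>
        -(1 / (n : ℝ)) * Real.logb 2 (decProb Q Γ (f n) (g n) false)) atTop := by
  classical
  obtain ⟨θ', hθ1, hθ2⟩ := exists_between hθ
  obtain ⟨δ, hδ, hD⟩ := exists_delta Q hQpos _ _ θ' hθ2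
  set γ := Γ x₀ ystar with hγ
  have hγ1 : γ ≤ 1 := by
    rw [hγ, ← (hΓ x₀).2]
    exact Finset.single_le_sum (fun a _ => (hΓ x₀).1 a) (Finset.mem_univ ystar)
  let f : ∀ n : ℕ, (Fin n → U) → Fin k → X :=
    fun n u _ => if devF (margU P) u ≤ δ then x₀ else x₁
  let g : ∀ n : ℕ, (Fin n → V) → (Fin k → Y) → Bool :=
    fun n v y => decide (¬ (devF (margV P) v ≤ δ ∧ ∃ j, y j = ystar))
  let I : ∀ n : ℕ, (Fin n → U × V) → Bool → ℝ := fun n w b =>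
    ∑ y : Fin k → Y, (∏ j, Γ (f n (fun i => (w i).1) j) (y j)) *
        (if g n (fun i => (w i).2) y = b then 1 else 0)
  have hdec : ∀ (R : U × V → ℝ) n b, decProb R Γ (f n) (g n) b =
      ∑ w : Fin n → U × V, (∏ i, R (w i)) * I n w b := fun R n b => decProb_eq R Γ (f n) (g n) b
  have hΓ0 : ∀ n (w : Fin n → U × V) (y : Fin k → Y),
      0 ≤ ∏ j, Γ (f n (fun i => (w i).1) j) (y j) :=
    fun n w y => Finset.prod_nonneg fun j _ => (hΓ _).1 _
  have hI0 : ∀ n w b, 0 ≤ I n w b := by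
    intro n w b
    refine Finset.sum_nonneg fun y _ => mul_nonneg (hΓ0 n w y) ?_
    split_ifs <;> norm_num
  have hIsum : ∀ n w, I n w true + I n w false = 1 := by
    intro n w
    have e : ∑ y : Fin k → Y, (∏ j, Γ (f n (fun i => (w i).1) j) (y j)) = 1 :=
      prod_total (Γ (if devF (margU P) (fun i => (w i).1) ≤ δ then x₀ else x₁)) (hΓ _)
    rw [← e, ← Finset.sum_add_distrib]
    refine Finset.sum_congr rfl fun y _ => ?_
    cases g n (fun i => (w i).2) y <;> simp
  have hIgood : ∀ n w, devF (margU P) (fun i => (w i).1) ≤ δ →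
      devF (margV P) (fun i => (w i).2) ≤ δ → I n w true = (1 - γ) ^ k := by
    intro n w h1 h2
    rw [hγ, ← inner_miss (Γ x₀) (hΓ x₀) ystar k]
    refine Finset.sum_congr rfl fun y _ => ?_
    by_cases hy : ∃ j, y j = ystar <;> simp [f, g, h1, h2, hy]
  have hIbad : ∀ n w, ¬ (devF (margU P) (fun i => (w i).1) ≤ δ ∧
      devF (margV P) (fun i => (w i).2) ≤ δ) → I n w false = 0 := by
    intro n w h
    refine Finset.sum_eq_zero fun y _ => ?_
    by_cases hu : devF (margU P) (fun i => (w i).1) ≤ δ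
    · have hv : ¬ devF (margV P) (fun i => (w i).2) ≤ δ := fun hv => h ⟨hu, hv⟩
      simp [g, hv]
    · by_cases hy : ∃ j, y j = ystar
      · obtain ⟨j, hj⟩ := hy
        rw [Finset.prod_eq_zero (Finset.mem_univ j), zero_mul]
        simp [f, hu, hj, h₁]
      · simp [g, hy]
  have hPw : ∀ n (w : Fin n → U × V), 0 ≤ ∏ i, P (w i) :=
    fun n w => Finset.prod_nonneg fun i _ => hP.1 _
  have hQw : ∀ n (w : Fin n → U × V), 0 < ∏ i, Q (w i) :=
    fun n w => Finset.prod_pos fun i _ => hQpos _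
  -- probability of atypical sequences
  let eU : ℕ → ℝ := fun n => ∑ w : Fin n → U × V, (∏ i, P (w i)) *
    (if devF (margU P) (fun i => (w i).1) ≤ δ then 0 else 1)
  let eV : ℕ → ℝ := fun n => ∑ w : Fin n → U × V, (∏ i, P (w i)) *
    (if devF (margV P) (fun i => (w i).2) ≤ δ then 0 else 1)
  have heU : ∀ n, 0 < n → eU n ≤ Fintype.card U / (n * δ) := by
    intro n hn
    refine cheb P hP (fun p : U × V => p.1) (margU P) (fun φ => ?_) hn δ hδ
    rw [Fintype.sum_prod_type]
    simp [margU, Finset.sum_mul]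
  have heV : ∀ n, 0 < n → eV n ≤ Fintype.card V / (n * δ) := by
    intro n hn
    refine cheb P hP (fun p : U × V => p.2) (margV P) (fun φ => ?_) hn δ hδ
    rw [Fintype.sum_prod_type_right]
    simp [margV, Finset.sum_mul]
  have hlim : Tendsto (fun n : ℕ => (Fintype.card U / (n * δ) + Fintype.card V / (n * δ) : ℝ))
      atTop (nhds 0) := by
    have h : Tendsto (fun n : ℕ => (n : ℝ) * δ) atTop atTop :=
      tendsto_natCast_atTop_atTop.atTop_mul_const hδ
    have := (h.const_div_atTop (Fintype.card U : ℝ)).add (h.const_div_atTop (Fintype.card V : ℝ))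
    simpa using this
  have hγk : 0 ≤ (1 - γ) ^ k := pow_nonneg (by linarith) _
  have hγk1 : γ ≤ 1 - (1 - γ) ^ k := by
    have := pow_le_of_le_one (a := 1 - γ) (n := k) (by linarith) (by linarith) (by omega)
    linarith
  have hα : ∀ n, decProb P Γ (f n) (g n) true ≤ (1 - γ) ^ k + (eU n + eV n) := by
    intro n
    rw [hdec]
    have e : (1 - γ) ^ k + (eU n + eV n) = ∑ w : Fin n → U × V, (∏ i, P (w i)) *
      ((1 - γ) ^ k + ((if devF (margU P) (fun i => (w i).1) ≤ δ then 0 else 1) +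
       (if devF (margV P) (fun i => (w i).2) ≤ δ then 0 else 1))) := by
      simp_rw [mul_add]
      rw [Finset.sum_add_distrib, Finset.sum_add_distrib, ← Finset.sum_mul, prod_total P hP, one_mul]
    rw [e]
    refine Finset.sum_le_sum fun w _ => mul_le_mul_of_nonneg_left ?_ (hPw n w)
    have h1 : I n w true ≤ 1 := by linarith [hIsum n w, hI0 n w false]
    by_cases hu : devF (margU P) (fun i => (w i).1) ≤ δ
    · by_cases hv : devF (margV P) (fun i => (w i).2) ≤ δ
      · rw [hIgood n w hu hv]; simp [hu, hv]
      · simp only [hu, hv, if_true, if_false]; linarith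
    · have : (0 : ℝ) ≤ (if devF (margV P) (fun i => (w i).2) ≤ δ then 0 else 1) := by
        split_ifs <;> norm_num
      simp only [hu, if_false]; linarith
  have hα0 : ∀ n, 0 ≤ decProb P Γ (f n) (g n) true := by
    intro n; rw [hdec]
    exact Finset.sum_nonneg fun w _ => mul_nonneg (hPw n w) (hI0 n w _)
  refine ⟨f, g, ?_, ?_⟩
  · refine le_of_forall_pos_le_add fun η hη => ?_
    refine limsup_le_of_le (isCoboundedUnder_le_of_le atTop (x := 0) hα0) ?_
    filter_upwards [hlim.eventually (gt_mem_nhds hη), eventually_gt_atTop 0] with n h1 h2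
    linarith [hα n, heU n h2, heV n h2]
  -- type II
  have hβle : ∀ n, 0 < n → decProb Q Γ (f n) (g n) false ≤
      (n + 1 : ℝ) ^ Fintype.card (U × V) * (2 : ℝ) ^ (-(n * θ')) := by
    intro n hn
    rw [hdec]
    refine le_trans (Finset.sum_le_sum fun w _ => mul_le_mul_of_nonneg_left ?_ (hQw n w).le)
      (types_bound Q hQpos hn (fun w => devF (margU P) (fun i => (w i).1) ≤ δ ∧
      devF (margV P) (fun i => (w i).2) ≤ δ) θ' ?_)
    · split_ifs with h
      · linarith [hIsum n w, hI0 n w true]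
      · exact (hIbad n w h).le
    · rintro w ⟨h1, h2⟩
      refine hD _ (emp_pmf hn w) ?_ ?_
      · simp_rw [margU_emp]; exact h1
      · simp_rw [margV_emp]; exact h2
  obtain ⟨p₀⟩ : Nonempty (U × V) := by
    by_contra hne
    rw [not_nonempty_iff] at hne
    have := hQ.2
    simp at this
  obtain ⟨pm, -, hpm⟩ := Finset.exists_min_image Finset.univ Q ⟨p₀, Finset.mem_univ _⟩
  have hq0 := hQpos pm
  set q := Q pm with hq
  have hβge : ∀ᶠ n : ℕ in atTop, γ * q ^ n ≤ decProb Q Γ (f n) (g n) false := by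
    filter_upwards [hlim.eventually (gt_mem_nhds one_pos), eventually_gt_atTop 0] with n h1 h2
    have hex : ∃ w : Fin n → U × V, devF (margU P) (fun i => (w i).1) ≤ δ ∧
        devF (margV P) (fun i => (w i).2) ≤ δ := by
      by_contra hno
      push Not at hno
      have : (1 : ℝ) ≤ eU n + eV n := by
        rw [← prod_total (n := n) P hP, ← Finset.sum_add_distrib]
        refine Finset.sum_le_sum fun w _ => ?_
        rw [← mul_add]
        refine le_mul_of_one_le_right (hPw n w) ?_
        by_cases hu : devF (margU P) (fun i => (w i).1) ≤ δ
        · have := hno w hu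
          simp [not_le.2 this, hu]
        · simp only [hu, if_false]
          split_ifs <;> norm_num
      linarith [heU n h2, heV n h2]
    obtain ⟨w, hu, hv⟩ := hex
    rw [hdec]
    refine le_trans ?_ (Finset.single_le_sum
      (fun w _ => mul_nonneg (hQw n w).le (hI0 n w false)) (Finset.mem_univ w))
    have h3 : γ ≤ I n w false := by linarith [hIsum n w, hIgood n w hu hv]
    have h4 : q ^ n ≤ ∏ i, Q (w i) := by
      have := Finset.prod_le_prod (s := (Finset.univ : Finset (Fin n))) (f := fun _ => q)
        (g := fun i => Q (w i)) (fun _ _ => hq0.le) (fun i _ => hpm _ (Finset.mem_univ _))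
      simpa using this
    rw [mul_comm]
    exact mul_le_mul h4 h3 h₀.le (hQw n w).le
  have hlog : Tendsto (fun n : ℕ => (Fintype.card (U × V) : ℝ) * (Real.logb 2 (n + 1) / n))
      atTop (nhds 0) := by
    have h1 : Tendsto (fun n : ℕ => Real.log ((n : ℝ) + 1) / ((1 : ℝ) * ((n : ℝ) + 1) + (-1)))
        atTop (nhds 0) := by
      have := Real.tendsto_pow_log_div_mul_add_atTop 1 (-1) 1 one_ne_zero
      have h2 : Tendsto (fun n : ℕ => (n : ℝ) + 1) atTop atTop :=
        tendsto_atTop_add_const_right _ _ tendsto_natCast_atTop_atTop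
      simpa [Function.comp_def] using this.comp h2
    have h3 := h1.const_mul ((Fintype.card (U × V) : ℝ) / Real.log 2)
    rw [mul_zero] at h3
    refine h3.congr fun n => ?_
    have : (1 : ℝ) * ((n : ℝ) + 1) + (-1) = n := by ring
    rw [this, Real.logb]; ring
  refine le_liminf_of_le ?_ ?_
  · refine IsBoundedUnder.isCoboundedUnder_ge ?_
    refine isBoundedUnder_of_eventually_le (a := -Real.logb 2 q - Real.logb 2 γ) ?_
    filter_upwards [hβge, eventually_gt_atTop 0] with n h1 h2
    have hn : (0 : ℝ) < n := by positivity
    have hn1 : (1 : ℝ) ≤ n := by exact_mod_cast h2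
    have h3 := Real.logb_le_logb_of_le (b := 2) (by norm_num) (by positivity) h1
    rw [Real.logb_mul h₀.ne' (by positivity), Real.logb_pow] at h3
    have h4 : Real.logb 2 γ ≤ 0 := Real.logb_nonpos (by norm_num) h₀.le hγ1
    rw [neg_mul, one_div, inv_mul_eq_div, neg_le, le_div_iff₀ hn]
    nlinarith
  · filter_upwards [hβge, eventually_gt_atTop 0,
      hlog.eventually (gt_mem_nhds (sub_pos.2 hθ1))] with n h1 h2 h5
    have hn : (0 : ℝ) < n := by positivity
    have hpos : 0 < decProb Q Γ (f n) (g n) false := lt_of_lt_of_le (by positivity) h1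
    have h3 := Real.logb_le_logb_of_le (b := 2) (by norm_num) hpos (hβle n h2)
    rw [Real.logb_mul (by positivity) (by positivity), Real.logb_pow,
      Real.logb_rpow (by norm_num) (by norm_num)] at h3
    rw [mul_div_assoc', div_lt_iff₀ hn] at h5
    rw [neg_mul, one_div, inv_mul_eq_div, le_neg, div_le_iff₀ hn]
    nlinarith
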